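/- Let D ⊂ ℂⁿ be a bounded hyperconvex domain. Then D does not have the punctured disc property; that is, there is no proper holomorphic map from the punctured closed unit disc 𝔻* = {z ∈ ℂ : 0 < |z| ≤ 1} to D. -/

import Mathlib

open MeasureTheory

/-- `ρ` is plurisubharmonic on `D`: upper semicontinuous and satisfying the sub-mean-value
inequality along every complex line, on every closed disc contained in `D`. -/
def PlurisubharmonicOn (n : ℕ) (ρ : (Fin n → ℂ) → ℝ) (D : Set (Fin n → ℂ)) : Prop :=
  UpperSemicontinuousOn ρ D ∧
  ∀ a b : Fin n → ℂ, ∀ r : ℝ, 0 < r →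
    (∀ t : ℂ, ‖t‖ ≤ r → a + t • b ∈ D) →
    ρ a ≤ (1 / (2 * Real.pi)) *
      ∫ θ in (0:ℝ)..(2 * Real.pi), ρ (a + ((r : ℂ) * Complex.exp (θ * Complex.I)) • b)

/-- `D` is hyperconvex: it admits a negative plurisubharmonic exhaustion function. -/
def Hyperconvex (n : ℕ) (D : Set (Fin n → ℂ)) : Prop :=
  ∃ ρ : (Fin n → ℂ) → ℝ, PlurisubharmonicOn n ρ D ∧ (∀ z ∈ D, ρ z < 0) ∧
    ∀ c : ℝ, c < 0 → IsCompact {z ∈ D | ρ z ≤ c}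

/-- The punctured closed unit disc `𝔻* = {z ∈ ℂ : 0 < |z| ≤ 1}`. -/
def puncturedDisc : Set ℂ := Metric.closedBall 0 1 \ {0}

/-- `D` has the punctured disc property: there is a proper holomorphic map `𝔻* → D`
(holomorphic on the open punctured disc, continuous on `𝔻*`). -/
def HasPDP (n : ℕ) (D : Set (Fin n → ℂ)) : Prop :=
  ∃ h : ℂ → (Fin n → ℂ),
    DifferentiableOn ℂ h (Metric.ball 0 1 \ {0}) ∧
    ContinuousOn h puncturedDisc ∧
    Set.MapsTo h puncturedDisc D ∧
    ∀ K : Set (Fin n → ℂ), K ⊆ D → IsCompact K →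
      IsCompact (puncturedDisc ∩ h ⁻¹' K)



open Filter Topology in
/-- Doubling of variables: a penalised function cannot have an interior maximum. -/
lemma psh_no_touch (n : ℕ) (D : Set (Fin n → ℂ)) (ρ : (Fin n → ℂ) → ℝ)
    (hpsh : PlurisubharmonicOn n ρ D) (hcont : ContinuousOn ρ D)
    (h : ℂ → (Fin n → ℂ)) (U : Set ℂ) (hU : IsOpen U) (hh : DifferentiableOn ℂ h U)
    (z0 : ℂ) (hz0U : z0 ∈ U) (hz0 : z0 ≠ 0) (y0 : Fin n → ℂ) (K ε η : ℝ)
    (hK : 0 ≤ K) (hη : 0 < η)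
    (hmax : ∀ᶠ t : ℂ in 𝓝 0, y0 + t • deriv h z0 ∈ D ∧
      ρ (y0 + t • deriv h z0) - K * ∑ i, ‖(y0 + t • deriv h z0) i - h (z0 + t) i‖ ^ 2
        + ε * Real.log ‖z0 + t‖ + η * ‖z0 + t‖ ^ 2
      ≤ ρ y0 - K * ∑ i, ‖y0 i - h z0 i‖ ^ 2 + ε * Real.log ‖z0‖ + η * ‖z0‖ ^ 2) : False := by
  set b := deriv h z0 with hb
  have hd : HasDerivAt h b z0 := ((hh z0 hz0U).differentiableAt (hU.mem_nhds hz0U)).hasDerivAt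
  obtain ⟨κ, hκ, hκ2⟩ : ∃ κ : ℝ, 0 < κ ∧ K * (n * κ ^ 2) < η := by
    have h1 : ∀ᶠ κ : ℝ in 𝓝 0, K * (n * κ ^ 2) < η := by
      have : ContinuousAt (fun κ : ℝ => K * (n * κ ^ 2)) 0 := by fun_prop
      exact this.eventually_lt_const (by simpa using hη)
    have h2 := (h1.filter_mono (nhdsWithin_le_nhds (s := Set.Ioi 0))).and self_mem_nhdsWithin
    obtain ⟨κ, h3, h4⟩ := h2.exists
    exact ⟨κ, h4, h3⟩
  have hlit := (hasDerivAt_iff_isLittleO_nhds_zero.1 hd).bound hκ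
  have hnz : ∀ᶠ t : ℂ in 𝓝 0, z0 + t ∈ U ∧ z0 + t ≠ 0 := by
    have hc : Tendsto (fun t : ℂ => z0 + t) (𝓝 0) (𝓝 z0) := by
      have : ContinuousAt (fun t : ℂ => z0 + t) 0 := by fun_prop
      simpa [ContinuousAt] using this
    exact (hc.eventually (hU.mem_nhds hz0U)).and (hc.eventually_ne hz0)
  obtain ⟨r, hr, hball⟩ := Metric.nhds_basis_closedBall.eventually_iff.1 ((hmax.and hlit).and hnz)
  let g : ℂ → ℂ := fun t => -2 * K * (∑ i, (starRingEnd ℂ (y0 i - h z0 i)) *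
    (h (z0 + t) i - h z0 i - t * b i)) - 2 * η * (starRingEnd ℂ z0) * t
  let G : ℂ → ℝ := fun t => (g t).re + (-ε) * Real.log ‖z0 + t‖
  have hGharm : InnerProductSpace.HarmonicOnNhd G (Metric.closedBall 0 |r|) := by
    rw [abs_of_pos hr]
    intro t ht
    obtain ⟨-, htU, ht0⟩ := hball ht
    have hha : AnalyticAt ℂ h (z0 + t) := hh.analyticAt (hU.mem_nhds htU)
    have hha' : ∀ i, AnalyticAt ℂ (fun t => h (z0 + t) i) t := by
      intro i
      have h1 : AnalyticAt ℂ (fun z => h z i) (z0 + t) := by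
        have : DifferentiableOn ℂ (fun z => h z i) U := fun z hz => (differentiableWithinAt_pi.1 (hh z hz)) i
        exact this.analyticAt (hU.mem_nhds htU)
      exact h1.fun_comp (f := fun t => z0 + t) (by fun_prop)
    have hg : AnalyticAt ℂ g t := by
      refine AnalyticAt.sub (AnalyticAt.mul (by fun_prop) ?_) (by fun_prop)
      refine Finset.analyticAt_fun_sum _ fun i _ => ?_
      exact AnalyticAt.mul (by fun_prop) (((hha' i).sub (by fun_prop)).sub (by fun_prop))
    have h1 := hg.harmonicAt_re
    have h2 : InnerProductSpace.HarmonicAt (fun t : ℂ => Real.log ‖z0 + t‖) t :=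
      AnalyticAt.harmonicAt_log_norm (by fun_prop) ht0
    exact h1.add (h2.const_smul (c := -ε))
  have hG0 : Real.circleAverage G 0 r = -ε * Real.log ‖z0‖ := by
    rw [hGharm.circleAverage_eq]
    simp [G, g]
  have key := hpsh.2 y0 b r hr (fun t ht => (hball (by simpa using ht)).1.1.1)
  have hkey : ρ y0 ≤ Real.circleAverage (fun t => ρ (y0 + t • b)) 0 r := by
    rw [Real.circleAverage_def]
    simpa [circleMap, smul_eq_mul] using key
  have hGint : CircleIntegrable G 0 r := by
    apply ContinuousOn.circleIntegrable'
    intro t ht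
    exact (hGharm t (Metric.sphere_subset_closedBall ht)).1.continuousAt.continuousWithinAt
  have hρint : CircleIntegrable (fun t => ρ (y0 + t • b)) 0 r := by
    apply ContinuousOn.circleIntegrable hr.le
    apply hcont.comp (by fun_prop)
    intro t ht
    exact (hball (Metric.sphere_subset_closedBall ht)).1.1.1
  set C : ℝ := ρ y0 + K * (n * (κ * r) ^ 2) + ε * Real.log ‖z0‖ - η * r ^ 2 with hC
  have hle : ∀ t ∈ Metric.sphere (0 : ℂ) |r|, ρ (y0 + t • b) ≤ G t + C := by
    rw [abs_of_pos hr]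
    intro t ht
    have htr : ‖t‖ = r := by simpa using ht
    obtain ⟨⟨⟨-, h1⟩, h2⟩, -⟩ := hball (Metric.sphere_subset_closedBall ht)
    have hsum : ∑ i, ‖(y0 + t • b) i - h (z0 + t) i‖ ^ 2 ≤
        ∑ i, (‖y0 i - h z0 i‖ ^ 2 - 2 * ((starRingEnd ℂ (y0 i - h z0 i)) *
          (h (z0 + t) i - h z0 i - t * b i)).re + (κ * r) ^ 2) := by
      apply Finset.sum_le_sum
      intro i _
      have h3 : ‖h (z0 + t) i - h z0 i - t * b i‖ ≤ κ * r := by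
        have := norm_le_pi_norm (h (z0 + t) - h z0 - t • b) i
        simp only [Pi.sub_apply, Pi.smul_apply, smul_eq_mul] at this
        rw [htr] at h2
        exact this.trans h2
      have h4 : ‖h (z0 + t) i - h z0 i - t * b i‖ ^ 2 ≤ (κ * r) ^ 2 := by gcongr
      have h5 : (y0 + t • b) i - h (z0 + t) i =
        (y0 i - h z0 i) - (h (z0 + t) i - h z0 i - t * b i) := by
        simp; ring
      rw [h5]
      generalize y0 i - h z0 i = w at *
      generalize h (z0 + t) i - h z0 i - t * b i = q at *
      rw [Complex.sq_norm, Complex.normSq_apply] at *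
      simp only [Complex.sub_re, Complex.sub_im, Complex.mul_re, Complex.conj_re, Complex.conj_im]
      rw [Complex.sq_norm, Complex.normSq_apply]
      nlinarith
    rw [Finset.sum_add_distrib, Finset.sum_sub_distrib, ← Finset.mul_sum] at hsum
    simp only [Finset.sum_const, Finset.card_univ, Fintype.card_fin, nsmul_eq_mul] at hsum
    have hsum' := mul_le_mul_of_nonneg_left hsum hK
    have hz : ‖z0 + t‖ ^ 2 = ‖z0‖ ^ 2 + 2 * ((starRingEnd ℂ z0) * t).re + r ^ 2 := by
      rw [← htr]
      simp only [Complex.sq_norm, Complex.normSq_apply, Complex.add_re, Complex.add_im,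
        Complex.mul_re, Complex.conj_re, Complex.conj_im]
      ring
    have hgre : (g t).re = -2 * K * (∑ i, ((starRingEnd ℂ (y0 i - h z0 i)) *
        (h (z0 + t) i - h z0 i - t * b i)).re) - 2 * η * ((starRingEnd ℂ z0) * t).re := by
      have : g t = ((-2 * K : ℝ) : ℂ) * (∑ i, (starRingEnd ℂ (y0 i - h z0 i)) *
        (h (z0 + t) i - h z0 i - t * b i)) - ((2 * η : ℝ) : ℂ) * ((starRingEnd ℂ z0) * t) := by
        simp only [g]; push_cast; ring
      rw [this, Complex.sub_re, Complex.re_ofReal_mul, Complex.re_ofReal_mul, Complex.re_sum]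
    simp only [G]
    rw [hz] at h1
    rw [hgre, hC]
    linarith
  have hfin := Real.circleAverage_mono hρint (hGint.add (circleIntegrable_const C 0 r)) hle
  have hadd : Real.circleAverage (G + fun _ => C) 0 r = -ε * Real.log ‖z0‖ + C := by
    rw [Real.circleAverage_add hGint (circleIntegrable_const C 0 r), hG0,
      Real.circleAverage_const]
  rw [hadd] at hfin
  have : 0 < r ^ 2 := by positivity
  have hκ3 : K * (n * κ ^ 2) * r ^ 2 < η * r ^ 2 := by gcongr
  rw [hC] at hfin
  nlinarith

lemma exhaustion_continuousOn (n : ℕ) (D : Set (Fin n → ℂ)) (ρ : (Fin n → ℂ) → ℝ)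
    (husc : UpperSemicontinuousOn ρ D) (hneg : ∀ z ∈ D, ρ z < 0)
    (hcomp : ∀ c : ℝ, c < 0 → IsCompact {z ∈ D | ρ z ≤ c}) : ContinuousOn ρ D := by
  rw [continuousOn_iff_lower_upperSemicontinuousOn]
  refine ⟨?_, husc⟩
  rw [lowerSemicontinuousOn_iff_preimage_Iic]
  intro c
  by_cases hc : c < 0
  · refine ⟨_, (hcomp c hc).isClosed, ?_⟩
    ext z
    simp
  · refine ⟨Set.univ, isClosed_univ, ?_⟩
    ext z
    simp only [Set.mem_inter_iff, Set.mem_preimage, Set.mem_Iic, Set.mem_univ, and_true,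
      and_iff_left_iff_imp]
    intro hz
    linarith [hneg z hz]

open Filter Topology in
/-- a bounded hyperconvex domain does not have the punctured disc
property. -/
theorem hyperconvex_not_hasPDP (n : ℕ) (D : Set (Fin n → ℂ))
    (hD : IsOpen D) (hDc : IsConnected D) (hDb : Bornology.IsBounded D)
    (hhyp : Hyperconvex n D) :
    ¬ HasPDP n D := by
  rintro ⟨h, hdiff, hhc, hmaps, hproper⟩
  obtain ⟨ρ, hpsh, hneg, hcomp⟩ := hhyp
  have hcont := exhaustion_continuousOn n D ρ hpsh.1 hneg hcomp
  have hmem : ∀ z : ℂ, 0 < ‖z‖ → ‖z‖ ≤ 1 → z ∈ puncturedDisc := by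
    intro z h1 h2
    exact ⟨by simpa using h2, by simpa using h1⟩
  -- bound on the circle of radius 1/2
  have hsph : Metric.sphere (0 : ℂ) (1 / 2) ⊆ puncturedDisc := by
    intro z hz
    have : ‖z‖ = 1 / 2 := by simpa using hz
    exact hmem z (by rw [this]; norm_num) (by rw [this]; norm_num)
  obtain ⟨c, hc, hcb⟩ : ∃ c : ℝ, 0 < c ∧ ∀ z : ℂ, ‖z‖ = 1 / 2 → ρ (h z) ≤ -2 * c := by
    obtain ⟨zm, hzm, hm⟩ := (isCompact_sphere (0 : ℂ) (1 / 2)).exists_isMaxOn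
      (NormedSpace.sphere_nonempty.2 (by norm_num))
      (hcont.comp (hhc.mono hsph) (hmaps.mono_left hsph))
    have := hneg _ (hmaps (hsph hzm))
    refine ⟨-(ρ (h zm)) / 2, by linarith, fun z hz => ?_⟩
    have : ρ (h z) ≤ ρ (h zm) := hm (by simpa using hz)
    linarith
  -- a point near 0
  obtain ⟨z1, hz1, hz1', hz1u⟩ : ∃ z1 : ℂ, 0 < ‖z1‖ ∧ ‖z1‖ < 1 / 2 ∧ -c < ρ (h z1) := by
    have hk := hproper _ (fun z hz => hz.1) (hcomp (-c) (by linarith))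
    have h0 : ∀ᶠ z : ℂ in 𝓝 0, z ∉ puncturedDisc ∩ h ⁻¹' {z ∈ D | ρ z ≤ -c} :=
      hk.isClosed.isOpen_compl.mem_nhds (by simp [puncturedDisc])
    have h1 : ∀ᶠ z : ℂ in 𝓝 0, ‖z‖ < 1 / 2 := by
      have : ContinuousAt (fun z : ℂ => ‖z‖) 0 := by fun_prop
      exact this.eventually_lt_const (by simp)
    have h2 : ∀ᶠ z : ℂ in 𝓝[≠] 0, z ≠ 0 := self_mem_nhdsWithin
    obtain ⟨z, ⟨ha, hb⟩, hz⟩ := (((h0.and h1).filter_mono nhdsWithin_le_nhds).and h2).exists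
    have hzp : 0 < ‖z‖ := by simpa using hz
    have hzm := hmem z hzp (by linarith)
    refine ⟨z, hzp, hb, ?_⟩
    by_contra hcon
    exact ha ⟨hzm, hmaps hzm, not_lt.1 hcon⟩
  have hlog : Real.log ‖z1‖ < 0 := Real.log_neg hz1 (by linarith)
  set ε : ℝ := c / (4 * -Real.log ‖z1‖) with hε
  have hεpos : 0 < ε := div_pos hc (by linarith)
  have hεlog : ε * Real.log ‖z1‖ = -c / 4 := by
    have := hlog.ne
    rw [hε]; field_simp
  set δ : ℝ := ‖z1‖ ^ 8 with hδ
  have hδpos : 0 < δ := by positivity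
  have hδlog : ε * Real.log δ = -2 * c := by
    rw [hδ, Real.log_pow]; push_cast; linarith
  have hδz1 : δ ≤ ‖z1‖ := pow_le_of_le_one hz1.le (by linarith) (by norm_num)
  set A : Set ℂ := {z | δ ≤ ‖z‖ ∧ ‖z‖ ≤ 1 / 2} with hA
  have hAc : IsCompact A := by
    apply (isCompact_closedBall (0 : ℂ) (1 / 2)).of_isClosed_subset
    · exact (isClosed_le continuous_const continuous_norm).inter
        (isClosed_le continuous_norm continuous_const)
    · intro z hz; simpa using hz.2
  have hAp : A ⊆ puncturedDisc := fun z hz => hmem z (hδpos.trans_le hz.1) (by linarith [hz.2])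
  have hAne : z1 ∈ A := ⟨hδz1, hz1'.le⟩
  have hHc : IsCompact (h '' A) := hAc.image_of_continuousOn (hhc.mono hAp)
  obtain ⟨s0, hs0, hs0D⟩ := hHc.exists_cthickening_subset_open hD
    (by rintro _ ⟨z, hz, rfl⟩; exact hmaps (hAp hz))
  have hD' : IsOpen (D ∩ ρ ⁻¹' Set.Iio (-(3 / 2) * c)) := hcont.isOpen_inter_preimage hD isOpen_Iio
  obtain ⟨s1, hs1, hs1D⟩ := ((isCompact_sphere (0 : ℂ) (1 / 2)).image_of_continuousOn
    (hhc.mono hsph)).exists_cthickening_subset_open hD' (by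
      rintro _ ⟨z, hz, rfl⟩
      refine ⟨hmaps (hsph hz), ?_⟩
      have := hcb z (by simpa using hz)
      simp only [Set.mem_preimage, Set.mem_Iio]
      linarith)
  set s : ℝ := min s0 s1 with hs
  have hspos : 0 < s := lt_min hs0 hs1
  have hsD : ∀ z ∈ A, ∀ v : Fin n → ℂ, ‖v‖ ≤ s → h z + v ∈ D := by
    intro z hz v hv
    apply hs0D
    apply Metric.mem_cthickening_of_dist_le _ (h z) _ _ (Set.mem_image_of_mem h hz)
    simpa using hv.trans (min_le_left _ _)
  have hsb : ∀ z : ℂ, ‖z‖ = 1 / 2 → ∀ v : Fin n → ℂ, ‖v‖ ≤ s → ρ (h z + v) < -(3 / 2) * c := by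
    intro z hz v hv
    refine (hs1D ?_).2
    have hz' : z ∈ Metric.sphere (0 : ℂ) (1 / 2) := by simpa using hz
    apply Metric.mem_cthickening_of_dist_le _ (h z) _ _ (Set.mem_image_of_mem h hz')
    simpa using hv.trans (min_le_right _ _)
  obtain ⟨m, hm⟩ : ∃ m : ℝ, ∀ z ∈ A, m ≤ ρ (h z) := by
    obtain ⟨zm, hzm, hm⟩ := hAc.exists_isMinOn ⟨z1, hAne⟩
      (hcont.comp (hhc.mono hAp) (hmaps.mono_left hAp))
    exact ⟨_, fun z hz => hm hz⟩
  set K : ℝ := (|m| + 1) / s ^ 2 with hK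
  have hKpos : 0 < K := by positivity
  have hKs : K * s ^ 2 = |m| + 1 := by rw [hK]; field_simp
  -- the penalised function
  let Ψ : ℂ × (Fin n → ℂ) → ℝ := fun p => ρ (h p.1 + p.2) - K * ∑ i, ‖p.2 i‖ ^ 2
    + ε * Real.log ‖p.1‖ + c * ‖p.1‖ ^ 2
  have hΨ : ContinuousOn Ψ (A ×ˢ Metric.closedBall 0 s) := by
    have h1 : ContinuousOn (fun p : ℂ × (Fin n → ℂ) => ρ (h p.1 + p.2))
        (A ×ˢ Metric.closedBall 0 s) := by
      apply hcont.comp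
      · exact ((hhc.mono hAp).comp continuousOn_fst (fun p hp => hp.1)).add continuousOn_snd
      · intro p hp
        exact hsD _ hp.1 _ (by simpa using hp.2)
    have h2 : ContinuousOn (fun p : ℂ × (Fin n → ℂ) => Real.log ‖p.1‖)
        (A ×ˢ Metric.closedBall 0 s) := by
      apply ContinuousOn.log (by fun_prop)
      intro p hp
      exact (hδpos.trans_le hp.1.1).ne'
    exact ((h1.sub (by fun_prop)).add (h2.const_mul ε)).add (by fun_prop)
  obtain ⟨⟨z0, v0⟩, ⟨hz0A, hv0⟩, hmax⟩ := (hAc.prod (isCompact_closedBall (0 : Fin n → ℂ) s)).exists_isMaxOn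
    ⟨(z1, 0), hAne, by simpa using hspos.le⟩ hΨ
  have hmax' : ∀ z ∈ A, ∀ v : Fin n → ℂ, ‖v‖ ≤ s → Ψ (z, v) ≤ Ψ (z0, v0) := by
    intro z hz v hv
    exact hmax (show (z, v) ∈ A ×ˢ Metric.closedBall 0 s from ⟨hz, by simpa using hv⟩)
  replace hz0A : z0 ∈ A := hz0A
  replace hv0 : ‖v0‖ ≤ s := by simpa using hv0
  have hsumnn : ∀ v : Fin n → ℂ, 0 ≤ K * ∑ i, ‖v i‖ ^ 2 := fun v => by positivity
  have hsumge : ∀ v : Fin n → ℂ, ‖v‖ ^ 2 ≤ ∑ i, ‖v i‖ ^ 2 := by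
    intro v
    have : ‖v‖ ≤ Real.sqrt (∑ i, ‖v i‖ ^ 2) := by
      refine (pi_norm_le_iff_of_nonneg (Real.sqrt_nonneg _)).2 fun i => ?_
      apply Real.le_sqrt_of_sq_le
      exact Finset.single_le_sum (f := fun i => ‖v i‖ ^ 2) (fun _ _ => by positivity)
        (Finset.mem_univ i)
    calc ‖v‖ ^ 2 ≤ Real.sqrt (∑ i, ‖v i‖ ^ 2) ^ 2 := by gcongr
      _ = _ := Real.sq_sqrt (by positivity)
  have hval : -(5 / 4) * c < Ψ (z0, v0) := by
    have h1 := hmax' z1 hAne 0 (by simpa using hspos.le)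
    have h2 : Ψ (z1, 0) = ρ (h z1) + ε * Real.log ‖z1‖ + c * ‖z1‖ ^ 2 := by simp [Ψ]
    have : 0 ≤ c * ‖z1‖ ^ 2 := by positivity
    linarith
  have hΨ0 : Ψ (z0, v0) = ρ (h z0 + v0) - K * ∑ i, ‖v0 i‖ ^ 2
    + ε * Real.log ‖z0‖ + c * ‖z0‖ ^ 2 := rfl
  have hz0pos : 0 < ‖z0‖ := hδpos.trans_le hz0A.1
  have hsq : c * ‖z0‖ ^ 2 ≤ c / 4 := by
    have : ‖z0‖ ^ 2 ≤ (1 / 2) ^ 2 := by gcongr; exact hz0A.2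
    nlinarith
  have hv0lt : ‖v0‖ < s := by
    refine lt_of_le_of_ne hv0 fun heq => ?_
    have h1 := hmax' z0 hz0A 0 (by simpa using hspos.le)
    have h2 : Ψ (z0, 0) = ρ (h z0) + ε * Real.log ‖z0‖ + c * ‖z0‖ ^ 2 := by simp [Ψ]
    have h3 := mul_le_mul_of_nonneg_left (hsumge v0) hKpos.le
    rw [heq, hKs] at h3
    have h4 := hneg _ (hsD z0 hz0A v0 hv0)
    have h5 := hm z0 hz0A
    have h6 := neg_abs_le m
    linarith
  have hlo : δ < ‖z0‖ := by
    refine lt_of_le_of_ne hz0A.1 fun heq => ?_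
    rw [← heq] at hΨ0
    rw [← heq] at hsq
    have h4 := hneg _ (hsD z0 hz0A v0 hv0)
    linarith [hsumnn v0]
  have hhi : ‖z0‖ < 1 / 2 := by
    refine lt_of_le_of_ne hz0A.2 fun heq => ?_
    have h4 := hsb z0 heq v0 hv0
    have h5 : ε * Real.log ‖z0‖ ≤ 0 :=
      mul_nonpos_of_nonneg_of_nonpos hεpos.le (Real.log_nonpos hz0pos.le (by linarith))
    linarith [hsumnn v0]
  -- apply the local lemma
  have hz0ne : z0 ≠ 0 := norm_pos_iff.1 hz0pos
  have hUo : IsOpen (Metric.ball (0 : ℂ) 1 \ {0}) := Metric.isOpen_ball.sdiff isClosed_singleton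
  have hz0U : z0 ∈ Metric.ball (0 : ℂ) 1 \ {0} := ⟨by simp; linarith, by simpa using hz0ne⟩
  refine psh_no_touch n D ρ hpsh hcont h _ hUo hdiff z0 hz0U hz0ne (h z0 + v0) K ε c hKpos.le hc ?_
  have hct : ContinuousAt (fun t : ℂ => z0 + t) 0 := by fun_prop
  have hh0 : ContinuousAt (fun t : ℂ => h (z0 + t)) 0 := by
    have h1 : ContinuousAt h (z0 + 0) := by
      rw [add_zero]
      exact ((hdiff z0 hz0U).differentiableAt (hUo.mem_nhds hz0U)).continuousAt
    exact ContinuousAt.comp (f := fun t : ℂ => z0 + t) h1 hct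
  have e1 : ∀ᶠ t : ℂ in 𝓝 0, δ < ‖z0 + t‖ := hct.norm.eventually_const_lt (by simpa using hlo)
  have e2 : ∀ᶠ t : ℂ in 𝓝 0, ‖z0 + t‖ < 1 / 2 :=
    hct.norm.eventually_lt_const (by simpa using hhi)
  have e3 : ∀ᶠ t : ℂ in 𝓝 0, ‖h z0 + v0 + t • deriv h z0 - h (z0 + t)‖ < s := by
    have h1 : ContinuousAt (fun t : ℂ => h z0 + v0 + t • deriv h z0) 0 := by fun_prop
    exact (h1.sub hh0).norm.eventually_lt_const (by simpa using hv0lt)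
  filter_upwards [e1, e2, e3] with t h1 h2 h3
  have hzA : z0 + t ∈ A := ⟨h1.le, h2.le⟩
  have h4 := hsD _ hzA _ h3.le
  have h5 := hmax' _ hzA _ h3.le
  rw [add_sub_cancel] at h4
  refine ⟨h4, ?_⟩
  simp only [Ψ] at h5
  rw [add_sub_cancel] at h5
  simpa using h5
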